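/- For a nonnegative finite measure μ on ℝⁿ (n ≥ 2) and t > 0, the Lebesgue measure of the set {x ∈ ℝⁿ : ∫ |x - y|^{-(n-1)} dμ(y) ≥ t} is at most C(n) · t^{-n/(n-1)} · μ(ℝⁿ)^{n/(n-1)} for a constant C(n) depending only on n. -/

import Mathlib

open MeasureTheory

/-- Truncated kernel. -/
noncomputable def rieszTrunc (n : ℕ) (r : ℝ) : ℝ → ℝ :=
  (Set.Iio r).indicator (fun s => s ^ (-((n : ℝ) - 1)))

lemma rieszTrunc_measurable (n : ℕ) (r : ℝ) : Measurable (rieszTrunc n r) := by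
  unfold rieszTrunc
  exact Measurable.indicator (by fun_prop) measurableSet_Iio

lemma rieszTrunc_lintegral (n : ℕ) (hn : 2 ≤ n) (r : ℝ) (hr : 0 < r) :
    ∫⁻ x : EuclideanSpace ℝ (Fin n), ENNReal.ofReal (rieszTrunc n r ‖x‖) =
      ENNReal.ofReal (n * (volume : Measure (EuclideanSpace ℝ (Fin n))).real (Metric.ball 0 1) * r) := by
  have : Nonempty (Fin n) := ⟨⟨0, by omega⟩⟩
  have key : ∀ y ∈ Set.Ioi (0:ℝ), y ^ (n - 1) • rieszTrunc n r y
      = (Set.Iio r).indicator (fun _ => (1:ℝ)) y := by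
    intro y hy
    have hy : 0 < y := hy
    by_cases h : y < r
    · have h1 : -((n:ℝ) - 1) = -((n - 1 : ℕ) : ℝ) := by
        rw [Nat.cast_sub (by omega)]; simp
      simp only [rieszTrunc, Set.indicator, Set.mem_Iio, h, if_true, smul_eq_mul]
      rw [h1, Real.rpow_neg hy.le, Real.rpow_natCast, mul_inv_cancel₀ (by positivity)]
    · simp [rieszTrunc, h]
  have hint : IntegrableOn ((Set.Iio r).indicator (fun _ => (1:ℝ))) (Set.Ioi 0) := by
    rw [integrableOn_indicator_iff measurableSet_Iio]
    exact integrableOn_const (by rw [Set.Iio_inter_Ioi]; simp)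
  have hI : Integrable (fun x : EuclideanSpace ℝ (Fin n) => rieszTrunc n r ‖x‖) := by
    rw [integrable_fun_norm_addHaar volume, finrank_euclideanSpace_fin]
    exact hint.congr_fun (fun y hy => (key y hy).symm) measurableSet_Ioi
  rw [← ofReal_integral_eq_lintegral_ofReal hI, integral_fun_norm_addHaar,
    finrank_euclideanSpace_fin, setIntegral_congr_fun measurableSet_Ioi key,
    setIntegral_indicator measurableSet_Iio, Set.Ioi_inter_Iio]
  · simp [hr.le, mul_assoc]
  · refine Filter.Eventually.of_forall fun x => ?_
    exact Set.indicator_apply_nonneg fun _ => Real.rpow_nonneg (norm_nonneg _) _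

theorem riesz_potential_weak_type (n : ℕ) (hn : 2 ≤ n) :
    ∃ C : ℝ, 0 < C ∧
      ∀ μ : Measure (EuclideanSpace ℝ (Fin n)), IsFiniteMeasure μ →
        ∀ t : ℝ, 0 < t →
          volume {x : EuclideanSpace ℝ (Fin n) |
              ENNReal.ofReal t ≤ ∫⁻ y, ENNReal.ofReal (‖x - y‖ ^ (-((n : ℝ) - 1))) ∂μ}
            ≤ ENNReal.ofReal
                (C * t ^ (-((n : ℝ) / (n - 1))) *
                  (μ Set.univ).toReal ^ ((n : ℝ) / (n - 1))) := by
  set c : ℝ := n * (volume : Measure (EuclideanSpace ℝ (Fin n))).real (Metric.ball 0 1) with hc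
  have hn1 : (0:ℝ) < (n:ℝ) - 1 := by
    have : (2:ℝ) ≤ n := by exact_mod_cast hn
    linarith
  have hcpos : 0 < c := by
    have : 0 < (volume : Measure (EuclideanSpace ℝ (Fin n))).real (Metric.ball 0 1) :=
      ENNReal.toReal_pos (Metric.measure_ball_pos _ _ one_pos).ne' measure_ball_lt_top.ne
    have : (0:ℝ) < n := by linarith
    positivity
  refine ⟨c * 2 ^ ((n : ℝ) / (n - 1)), by positivity, ?_⟩
  intro μ hμ t ht
  set m := (μ Set.univ).toReal with hm
  have hmu : μ Set.univ = ENNReal.ofReal m := (ENNReal.ofReal_toReal (measure_ne_top _ _)).symm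
  rcases (ENNReal.toReal_nonneg : 0 ≤ (μ Set.univ).toReal).eq_or_lt with h0 | hmpos
  · have : μ = 0 := by
      rw [← Measure.measure_univ_eq_zero, hmu, hm, ← h0]; simp
    subst this
    simp [not_le.mpr ht]
  rw [← hm] at hmpos
  set r : ℝ := (2 * m / t) ^ (1 / ((n:ℝ) - 1)) with hrdef
  have hq : 0 < 2 * m / t := by positivity
  have hr : 0 < r := by positivity
  have hrp : r ^ (-((n:ℝ) - 1)) * m = t / 2 := by
    rw [hrdef, ← Real.rpow_mul hq.le]
    have : 1 / ((n:ℝ) - 1) * (-((n:ℝ) - 1)) = -1 := by field_simp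
    rw [this, Real.rpow_neg_one]
    field_simp
  have hmeas2 : Measurable (Function.uncurry fun (x y : EuclideanSpace ℝ (Fin n)) =>
      ENNReal.ofReal (rieszTrunc n r ‖x - y‖)) := by
    have := rieszTrunc_measurable n r
    unfold Function.uncurry
    fun_prop
  have hsub : {x : EuclideanSpace ℝ (Fin n) |
      ENNReal.ofReal t ≤ ∫⁻ y, ENNReal.ofReal (‖x - y‖ ^ (-((n : ℝ) - 1))) ∂μ} ⊆
      {x | ENNReal.ofReal (t / 2) ≤ ∫⁻ y, ENNReal.ofReal (rieszTrunc n r ‖x - y‖) ∂μ} := by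
    intro x hx
    simp only [Set.mem_ofPred_eq] at hx ⊢
    have h1 : ∫⁻ y, ENNReal.ofReal (‖x - y‖ ^ (-((n : ℝ) - 1))) ∂μ ≤
        ∫⁻ y, (ENNReal.ofReal (rieszTrunc n r ‖x - y‖) +
          ENNReal.ofReal (r ^ (-((n:ℝ) - 1)))) ∂μ := by
      refine lintegral_mono fun y => ?_
      by_cases h : ‖x - y‖ < r
      · simp [rieszTrunc, h]
      · refine le_trans (ENNReal.ofReal_le_ofReal ?_) le_add_self
        exact Real.rpow_le_rpow_of_nonpos hr (not_lt.mp h) (by linarith)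
    rw [lintegral_add_right _ measurable_const, lintegral_const, hmu,
      ← ENNReal.ofReal_mul (by positivity), hrp] at h1
    have h2 := hx.trans h1
    have h3 : ENNReal.ofReal t = ENNReal.ofReal (t/2) + ENNReal.ofReal (t/2) := by
      rw [← ENNReal.ofReal_add (by positivity) (by positivity)]; simp
    rw [h3] at h2
    exact (ENNReal.add_le_add_iff_right ENNReal.ofReal_ne_top).mp h2
  have hswap : ∫⁻ x : EuclideanSpace ℝ (Fin n), ∫⁻ y, ENNReal.ofReal (rieszTrunc n r ‖x - y‖) ∂μ
      = ENNReal.ofReal (c * r * m) := by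
    rw [lintegral_lintegral_swap hmeas2.aemeasurable]
    have : ∀ y : EuclideanSpace ℝ (Fin n),
        ∫⁻ x : EuclideanSpace ℝ (Fin n), ENNReal.ofReal (rieszTrunc n r ‖x - y‖)
          = ENNReal.ofReal (c * r) := by
      intro y
      rw [lintegral_sub_right_eq_self
        (fun x : EuclideanSpace ℝ (Fin n) => ENNReal.ofReal (rieszTrunc n r ‖x‖)) y]
      exact rieszTrunc_lintegral n hn r hr
    simp_rw [this]
    rw [lintegral_const, hmu, ← ENNReal.ofReal_mul (by positivity)]
  calc _ ≤ _ := measure_mono hsub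
    _ ≤ _ := meas_ge_le_lintegral_div (hmeas2.lintegral_prod_right).aemeasurable
        (by simpa using ht) ENNReal.ofReal_ne_top
    _ = _ := by
      rw [hswap, ← ENNReal.ofReal_div_of_pos (by positivity)]
      congr 1
      have e : (n:ℝ) / (n - 1) = 1 / ((n:ℝ) - 1) + 1 := by field_simp; ring
      have : c * 2 ^ ((n : ℝ) / (n - 1)) * t ^ (-((n : ℝ) / (n - 1))) * m ^ ((n : ℝ) / (n - 1))
          = c * (2 * m / t) ^ ((n : ℝ) / (n - 1)) := by
        rw [Real.div_rpow (by positivity) ht.le, Real.mul_rpow (by positivity) hmpos.le,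
          Real.rpow_neg ht.le]
        ring
      rw [this, e, Real.rpow_add_one hq.ne', ← hrdef]
      field_simp
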